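/- Let A := N/d + c·L and for z > 0 define r(z) := (N + A)·log₂ z + log₂((A+1)·e^{A+1}) + N·log₂ d. Let 0 < ε < 1, and let PWS = (S, (p_I)_{I∈S}) be a piecewise stationary model for sequences of length n such that p_I(x) ≤ 1 − ε for every I ∈ S and every symbol x. For any realization of Algorithm RFD in which c = γ/L for an integer γ ≥ 0, setting δ := r(L+1) / (ε·(L−γ)·log₂ e), it holds that ℓ(x^n; RFD) − (1+δ)·ℓ(x^n; PWS) ≤ |S|·[ (L−γ)·log₂(e·(L+1)) + log₂(L−γ) + r(L+1) ] + r(L+1). -/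

import Mathlib

open Finset

/-- One call to `Update`: if the total would exceed `T`, rescale first
(replace each count `s i` by `max 1 ⌊cf * s i⌋`), then add `d` to the count of `x`. -/
noncomputable def RFDupdate {N : ℕ} (cf : ℝ) (d T : ℕ) (s : Fin N → ℕ) (x : Fin N) : Fin N → ℕ :=
  let s' : Fin N → ℕ :=
    if T < (∑ i, s i) + d then (fun i => max 1 ⌊cf * (s i : ℝ)⌋₊) else s
  fun i => if i = x then s' i + d else s' i

/-- State (counts) of Algorithm RFD after `k` update steps on the input sequence `xs`
(0-indexed: the `k`-th step processes symbol `xs (k-1)`). -/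
noncomputable def RFDcounts {N : ℕ} (cf : ℝ) (d T : ℕ) (s0 : Fin N → ℕ) (xs : ℕ → Fin N) : ℕ → Fin N → ℕ
  | 0 => s0
  | k + 1 => RFDupdate cf d T (RFDcounts cf d T s0 xs k) (xs k)

/-- Total counter `t` after `k` update steps. -/
noncomputable def RFDtotal {N : ℕ} (cf : ℝ) (d T : ℕ) (s0 : Fin N → ℕ) (xs : ℕ → Fin N) (k : ℕ) : ℕ :=
  ∑ i, RFDcounts cf d T s0 xs k i

/-- A rescale takes place in step `k ≥ 1` iff at the beginning of step `k`
the total plus `d` exceeds `T`. -/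
def RFDrescaleAt {N : ℕ} (cf : ℝ) (d T : ℕ) (s0 : Fin N → ℕ) (xs : ℕ → Fin N) (k : ℕ) : Prop :=
  1 ≤ k ∧ T < RFDtotal cf d T s0 xs (k - 1) + d

/-- `P` is a partition of the integer interval `[a,b]` into consecutive closed intervals,
listed in order; an interval `[i,j]` is represented by the pair `(i,j)`. -/
def ConsecPartition (a b : ℕ) (P : List (ℕ × ℕ)) : Prop :=
  P ≠ [] ∧ P.head?.map Prod.fst = some a ∧ P.getLast?.map Prod.snd = some b ∧
    (∀ p ∈ P, p.1 ≤ p.2) ∧ P.Chain' (fun p q => q.1 = p.2 + 1)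

/-- `P` is the rescale partition of `[a,b]`: a partition into consecutive intervals `[i,j]`
such that no rescale occurs at steps `i,…,j-1`, and a rescale occurs at step `j` whenever
`j < b` (for the last interval, a rescale at its last step is optional). -/
def RFDrescalePartition {N : ℕ} (cf : ℝ) (d T : ℕ) (s0 : Fin N → ℕ) (xs : ℕ → Fin N)
    (a b : ℕ) (P : List (ℕ × ℕ)) : Prop :=
  ConsecPartition a b P ∧
    (∀ p ∈ P, ∀ k, p.1 ≤ k → k < p.2 → ¬ RFDrescaleAt cf d T s0 xs k) ∧
    (∀ p ∈ P, p.2 < b → RFDrescaleAt cf d T s0 xs p.2)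

/-- The probability `RFD(x; x^k)` that Algorithm RFD assigns to symbol `x` after `k` steps. -/
noncomputable def RFDprob {N : ℕ} (cf : ℝ) (d T : ℕ) (s0 : Fin N → ℕ) (xs : ℕ → Fin N)
    (k : ℕ) (x : Fin N) : ℝ :=
  (RFDcounts cf d T s0 xs k x : ℝ) / (RFDtotal cf d T s0 xs k : ℝ)

/-- Ideal code length (in bits) of Algorithm RFD on steps `a,…,b` (1-indexed steps;
step `k` encodes symbol `xs (k-1)` using the prediction after `k-1` steps). -/
noncomputable def RFDcodeLen {N : ℕ} (cf : ℝ) (d T : ℕ) (s0 : Fin N → ℕ) (xs : ℕ → Fin N)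
    (a b : ℕ) : ℝ :=
  -∑ k ∈ Finset.Icc a b, Real.logb 2 (RFDprob cf d T s0 xs (k - 1) (xs (k - 1)))

/-- Ideal code length (in bits) of a fixed distribution `p` on steps `a,…,b`. -/
noncomputable def distCodeLen {N : ℕ} (p : Fin N → ℝ) (xs : ℕ → Fin N) (a b : ℕ) : ℝ :=
  -∑ k ∈ Finset.Icc a b, Real.logb 2 (p (xs (k - 1)))

/-- The redundancy function `r(z) = (N + A)·log₂ z + log₂((A+1)·e^(A+1)) + N·log₂ d`. -/
noncomputable def rBound (N d : ℕ) (A z : ℝ) : ℝ :=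
  ((N : ℝ) + A) * Real.logb 2 z + Real.logb 2 ((A + 1) * Real.exp (A + 1))
    + (N : ℝ) * Real.logb 2 d

/-- Ideal code length of a piecewise stationary model with partition `S` (a list of
consecutive intervals of `[1,n]`) and per-segment distributions `pI`: on each segment
`I = [a,b] ∈ S`, symbol `x_k` (`a ≤ k ≤ b`) is coded with `-log₂ p_I(x_k)` bits. -/
noncomputable def pwsCodeLen {N : ℕ} (S : List (ℕ × ℕ)) (pI : ℕ × ℕ → Fin N → ℝ)
    (xs : ℕ → Fin N) : ℝ :=
  (S.map (fun q => -∑ k ∈ Finset.Icc q.1 q.2, Real.logb 2 (pI q (xs (k - 1))))).sum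

theorem prod_range_count {α : Type*} [Fintype α] [DecidableEq α] (y : ℕ → α)
    (f : α → ℕ → ℝ) (m : ℕ) :
    ∏ k ∈ range m, f (y k) (Nat.count (fun j => y j = y k) k) =
      ∏ x, ∏ j ∈ range (Nat.count (fun j => y j = x) m), f x j := by
  induction m with
  | zero => simp
  | succ m ih =>
    rw [prod_range_succ, ih]
    have h : ∀ x, ∏ j ∈ range (Nat.count (fun j => y j = x) (m + 1)), f x j =
        (∏ j ∈ range (Nat.count (fun j => y j = x) m), f x j) *
          if y m = x then f x (Nat.count (fun j => y j = x) m) else 1 := by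
      intro x
      rw [Nat.count_succ]
      split_ifs with hx <;> simp [prod_range_succ]
    simp_rw [h]
    rw [prod_mul_distrib, prod_ite_eq]
    simp

theorem sum_count_eq {α : Type*} [Fintype α] [DecidableEq α] (y : ℕ → α) (m : ℕ) :
    ∑ x, Nat.count (fun j => y j = x) m = m := by
  induction m with
  | zero => simp
  | succ m ih => simp [Nat.count_succ, sum_add_distrib, ih]

theorem factorial_mul_prod_pow_le {α : Type*} [Fintype α] [DecidableEq α] (p : α → ℝ)
    (hp : ∀ x, 0 ≤ p x) (hp1 : ∑ x, p x = 1) (c : α → ℕ) (m : ℕ) (hc : ∑ x, c x = m) :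
    (m.factorial : ℝ) * ∏ x, p x ^ c x ≤ ∏ x, ((c x).factorial : ℝ) := by
  have h1 : (Nat.multinomial univ c : ℝ) * ∏ x, p x ^ c x ≤ 1 := by
    have h := Finset.sum_pow_eq_sum_piAntidiag univ p m
    rw [hp1, one_pow] at h
    rw [h]
    refine Finset.single_le_sum
      (f := fun k : α → ℕ => (Nat.multinomial univ k : ℝ) * ∏ x, p x ^ k x) ?_ ?_
    · intro k _
      exact mul_nonneg (Nat.cast_nonneg _) (prod_nonneg fun x _ => pow_nonneg (hp x) _)
    · simp [Finset.mem_piAntidiag, hc]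
  have h2 : (∏ x, ((c x).factorial : ℝ)) * (Nat.multinomial univ c : ℝ) = m.factorial := by
    have := Nat.multinomial_spec univ c
    rw [hc] at this
    exact_mod_cast this
  rw [← h2, mul_assoc]
  exact mul_le_of_le_one_right (prod_nonneg fun x _ => Nat.cast_nonneg _) h1

/-- A rising product started at a count `s ≥ 1` loses at most a factor `d * m` against
`d ^ n * n!`, and loses nothing if `d ≤ s` or `n = 0`. -/
theorem pow_mul_factorial_le_prod (d s n m : ℕ) (hd : 1 ≤ d) (hs : 1 ≤ s) (hnm : n ≤ m) :
    (d : ℝ) ^ n * n.factorial ≤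
      (if s < d ∧ 0 < n then (d : ℝ) * m else 1) * ∏ j ∈ range n, ((s : ℝ) + d * j) := by
  have hs' : (1 : ℝ) ≤ s := by exact_mod_cast hs
  have hd' : (1 : ℝ) ≤ d := by exact_mod_cast hd
  have hfac : ∀ n : ℕ, (d : ℝ) ^ n * n.factorial = ∏ j ∈ range n, ((d : ℝ) * (j + 1)) := by
    intro n
    rw [prod_mul_distrib, prod_const, card_range, ← prod_range_add_one_eq_factorial]
    push_cast; rfl
  rcases Nat.eq_zero_or_pos n with rfl | hn
  · simp
  by_cases h : s < d
  · obtain ⟨n, rfl⟩ : ∃ k, n = k + 1 := ⟨n - 1, by omega⟩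
    simp only [h, Nat.succ_pos, and_self, if_true]
    have hP : (d : ℝ) ^ n * n.factorial ≤ ∏ j ∈ range (n + 1), ((s : ℝ) + d * j) := by
      rw [prod_range_succ', hfac]
      push_cast
      have h3 : ∏ j ∈ range n, ((d : ℝ) * (j + 1)) ≤ ∏ j ∈ range n, ((s : ℝ) + d * (j + 1)) :=
        prod_le_prod (fun _ _ => by positivity) (fun _ _ => by linarith)
      refine h3.trans (le_mul_of_one_le_right (prod_nonneg fun _ _ => by positivity) ?_)
      simpa using hs'
    have hm : ((n + 1 : ℕ) : ℝ) ≤ m := by exact_mod_cast hnm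
    calc (d : ℝ) ^ (n + 1) * (n + 1).factorial
        = (d * ((n + 1 : ℕ) : ℝ)) * ((d : ℝ) ^ n * n.factorial) := by
          rw [Nat.factorial_succ]; push_cast; ring
      _ ≤ _ := by gcongr
  · simp only [h, false_and, if_false, one_mul]
    rw [hfac]
    refine prod_le_prod (fun _ _ => by positivity) (fun j _ => ?_)
    have : (d : ℝ) ≤ s := by exact_mod_cast not_lt.mp h
    linarith

/-- Redundancy of the adaptive model with increment `d` and no rescale, relative to a fixed
distribution. -/
theorem sum_log_sub_sum_log_le {α : Type*} [Fintype α] [DecidableEq α] (y : ℕ → α)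
    (p : α → ℝ) (hp : ∀ x, 0 ≤ p x) (hp1 : ∑ x, p x = 1) (m d : ℕ) (hm : 1 ≤ m) (hd : 1 ≤ d)
    (hpos : ∀ k < m, 0 < p (y k))
    (s : α → ℕ) (hs : ∀ x, 1 ≤ s x) (t : ℕ) (ht : 0 < t) (w : ℝ) (hw : (t : ℝ) / d ≤ w) :
    ∑ k ∈ range m, Real.log (p (y k)) -
      ∑ k ∈ range m, Real.log
        (((s (y k) : ℝ) + d * (Nat.count (fun j => y j = y k) k : ℕ)) / ((t : ℝ) + d * k)) ≤
      (#{x | s x < d ∧ 0 < Nat.count (fun j => y j = x) m} : ℝ) * (Real.log d + Real.log m) +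
        ∑ k ∈ range m, Real.log ((w + k) / (k + 1)) := by
  have hd' : (1 : ℝ) ≤ d := by exact_mod_cast hd
  have hm' : (1 : ℝ) ≤ m := by exact_mod_cast hm
  have ht' : (0 : ℝ) < t := by exact_mod_cast ht
  have hw0 : 0 < w := lt_of_lt_of_le (by positivity) hw
  have hs' : ∀ x, (1 : ℝ) ≤ s x := fun x => by exact_mod_cast hs x
  set c : α → ℕ := fun x => Nat.count (fun j => y j = x) m with hc
  set D := #{x | s x < d ∧ 0 < c x} with hD
  have hcm : ∀ x, c x ≤ m := fun x => Nat.count_le _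
  have hp_prod : ∏ k ∈ range m, p (y k) = ∏ x, p x ^ c x := by
    have := prod_range_count y (fun x _ => p x) m
    simpa using this
  have hs_prod : ∏ k ∈ range m, ((s (y k) : ℝ) + d * (Nat.count (fun j => y j = y k) k : ℕ)) =
      ∏ x, ∏ j ∈ range (c x), ((s x : ℝ) + d * j) :=
    prod_range_count y (fun x j => (s x : ℝ) + d * j) m
  have hlow : (d : ℝ) ^ m * ∏ x, ((c x).factorial : ℝ) ≤
      ((d : ℝ) * m) ^ D * ∏ x, ∏ j ∈ range (c x), ((s x : ℝ) + d * j) := by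
    have h := prod_le_prod (s := univ) (fun x _ => by positivity)
      (fun x _ => pow_mul_factorial_le_prod d (s x) (c x) m hd (hs x) (hcm x))
    rw [prod_mul_distrib, prod_mul_distrib, prod_pow_eq_pow_sum, sum_count_eq,
      ← prod_filter, prod_const] at h
    exact h
  have hfac := factorial_mul_prod_pow_le p hp hp1 c m (sum_count_eq y m)
  have hW : ∏ k ∈ range m, ((t : ℝ) + d * k) ≤
      (d : ℝ) ^ m * (m.factorial * ∏ k ∈ range m, ((w + k) / ((k : ℝ) + 1))) := by
    rw [prod_div_distrib]
    have h1 : ∏ k ∈ range m, ((k : ℝ) + 1) = m.factorial := by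
      rw [← prod_range_add_one_eq_factorial]; push_cast; rfl
    have h2 : (m.factorial : ℝ) ≠ 0 := by positivity
    rw [h1, mul_div_cancel₀ _ h2]
    have : (d : ℝ) ^ m = ∏ k ∈ range m, (d : ℝ) := by simp
    rw [this, ← prod_mul_distrib]
    refine prod_le_prod (fun _ _ => by positivity) (fun k _ => ?_)
    have : (t : ℝ) ≤ w * d := (div_le_iff₀ (by linarith)).1 hw
    nlinarith
  set W := ∏ k ∈ range m, ((w + k) / ((k : ℝ) + 1)) with hWd
  have hWpos : 0 < W := prod_pos fun _ _ => by positivity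
  set Q := ∏ x, ∏ j ∈ range (c x), ((s x : ℝ) + d * j) with hQ
  have hterm : ∀ x (j : ℕ), 0 < (s x : ℝ) + d * j := fun x j => by
    have := hs' x
    positivity
  have hQpos : 0 < Q := prod_pos fun x _ => prod_pos fun j _ => hterm x j
  have hTpos : 0 < ∏ k ∈ range m, ((t : ℝ) + d * k) := prod_pos fun _ _ => by positivity
  have hPpos : 0 < ∏ x, p x ^ c x := by
    rw [← hp_prod]
    exact prod_pos fun k hk => hpos k (mem_range.1 hk)
  have key : (∏ x, p x ^ c x) * ∏ k ∈ range m, ((t : ℝ) + d * k) ≤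
      ((d : ℝ) * m) ^ D * Q * W := by
    calc (∏ x, p x ^ c x) * ∏ k ∈ range m, ((t : ℝ) + d * k)
        ≤ (∏ x, p x ^ c x) * ((d : ℝ) ^ m * (m.factorial * W)) := by gcongr
      _ = (d : ℝ) ^ m * (m.factorial * ∏ x, p x ^ c x) * W := by ring
      _ ≤ (d : ℝ) ^ m * (∏ x, ((c x).factorial : ℝ)) * W := by gcongr
      _ ≤ _ := by gcongr
  have hlog := Real.log_le_log (by positivity) key
  have hdm : (0 : ℝ) < d * m := by positivity
  rw [Real.log_mul hPpos.ne' hTpos.ne', Real.log_mul (by positivity) hWpos.ne',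
    Real.log_mul (by positivity) hQpos.ne', Real.log_pow, Real.log_mul (by positivity)
    (by positivity), ← hp_prod, hWd, ← hs_prod,
    Real.log_prod (fun k hk => (hpos k (mem_range.1 hk)).ne'),
    Real.log_prod (fun k _ => by positivity), Real.log_prod (fun k _ => (hterm _ _).ne'),
    Real.log_prod (fun k _ => by positivity)] at hlog
  have hdiv : ∑ k ∈ range m, Real.log
        (((s (y k) : ℝ) + d * (Nat.count (fun j => y j = y k) k : ℕ)) / ((t : ℝ) + d * k)) =
      ∑ k ∈ range m, Real.log ((s (y k) : ℝ) + d * (Nat.count (fun j => y j = y k) k : ℕ)) -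
        ∑ k ∈ range m, Real.log ((t : ℝ) + d * k) := by
    rw [← sum_sub_distrib]
    exact sum_congr rfl fun k _ => Real.log_div (hterm _ _).ne' (by positivity)
  rw [hdiv]
  linarith

theorem sum_log_add_div_le (v : ℝ) (hv : 0 ≤ v) (m : ℕ) (hm : 1 ≤ m) :
    ∑ k ∈ range m, Real.log ((v + 1 + k) / ((k : ℝ) + 1)) ≤
      Real.log (v + 1) + v * Real.log m := by
  induction m, hm using Nat.le_induction with
  | base => simp
  | succ m hm ih =>
    rw [sum_range_succ]
    have hm' : (1 : ℝ) ≤ m := by exact_mod_cast hm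
    have h1 : Real.log ((v + 1 + m) / (m + 1)) ≤ v / (m + 1) := by
      have := Real.log_le_sub_one_of_pos (x := (v + 1 + m) / (m + 1)) (by positivity)
      refine this.trans (le_of_eq ?_)
      field_simp; ring
    have h2 : 1 / ((m : ℝ) + 1) ≤ Real.log (m + 1) - Real.log m := by
      have := Real.log_le_sub_one_of_pos (x := (m : ℝ) / (m + 1)) (by positivity)
      rw [Real.log_div (by positivity) (by positivity)] at this
      have e : (m : ℝ) / (m + 1) - 1 = - (1 / ((m : ℝ) + 1)) := by field_simp; ring
      linarith
    have h3 : v / ((m : ℝ) + 1) = v * (1 / (m + 1)) := by ring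
    push_cast
    nlinarith [mul_le_mul_of_nonneg_left h2 hv]

/-- Accounting invariant after `u` steps and `j` started segments: the excess code length `E`
is at most `K` per segment plus `β` per step, where steps after the last rescale `g` may
instead be charged `R * (u - g) / (u - g + 1)` in total. -/
def RedundancyInv (resc : ℕ → Prop) (K β R : ℝ) (j u : ℕ) (E : ℝ) : Prop :=
  E ≤ K * j + β * u ∨
    ∃ g < u, resc g ∧ (∀ k, g < k → k ≤ u → ¬ resc k) ∧
      E ≤ K * j + β * g + R * (((u : ℝ) - g) / ((u : ℝ) - g + 1))

theorem div_add_one_mono {x y : ℝ} (hx : 0 ≤ x) (hxy : x ≤ y) : x / (x + 1) ≤ y / (y + 1) := by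
  rw [div_le_div_iff₀ (by linarith) (by linarith)]
  nlinarith

theorem RedundancyInv.segment {resc : ℕ → Prop} {K β R : ℝ} (hβ : 0 ≤ β) (hR : 0 ≤ R)
    (hcomp : ∀ g k : ℕ, g < k → resc g → resc k → (∀ i, g < i → i < k → ¬ resc i) →
      R * (((k : ℝ) - g) / ((k : ℝ) - g + 1)) ≤ β * ((k : ℝ) - g))
    (F : ℕ → ℝ) {a j : ℕ} {E : ℝ} (h : RedundancyInv resc K β R j a E) :
    ∀ m : ℕ, 1 ≤ m →
    (∀ m', 1 ≤ m' → m' ≤ m → (∀ i, a < i → i < a + m' → ¬ resc i) →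
      ∑ k ∈ range m', F (a + k) ≤ K) →
    (∀ g m', a < g → 1 ≤ m' → g + m' ≤ a + m → resc g →
      (∀ i, g < i → i < g + m' → ¬ resc i) →
      ∑ k ∈ range m', F (g + k) ≤ R * ((m' : ℝ) / (m' + 1))) →
    RedundancyInv resc K β R (j + 1) (a + m) (E + ∑ k ∈ range m, F (a + k)) := by
  intro m
  induction m using Nat.strong_induction_on with
  | _ m ih =>
  intro hm hnon hfresh
  by_cases hex : ∃ g, a < g ∧ g < a + m ∧ resc g
  · classical
    obtain ⟨g, hg, hgmax⟩ : ∃ g ∈ (Ioo a (a + m)).filter resc,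
        ∀ i ∈ (Ioo a (a + m)).filter resc, i ≤ g := by
      obtain ⟨g, h1, h2, h3⟩ := hex
      exact exists_max_image ((Ioo a (a + m)).filter resc) id
        ⟨g, by simp [h1, h2, h3]⟩
    simp only [mem_filter, mem_Ioo] at hg hgmax
    obtain ⟨⟨hag, hgm⟩, hrg⟩ := hg
    have hno : ∀ i, g < i → i < a + m → ¬ resc i := fun i h1 h2 h3 => by
      have := hgmax i ⟨⟨by omega, h2⟩, h3⟩
      omega
    obtain ⟨l, rfl⟩ : ∃ l, g = a + l := ⟨g - a, by omega⟩
    obtain ⟨m', rfl⟩ : ∃ m', m = l + m' := ⟨m - l, by omega⟩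
    have hprev := ih l (by omega) (by omega)
      (fun m₁ h1 h2 h3 => hnon m₁ h1 (by omega) h3)
      (fun g m₁ h1 h2 h3 h4 h5 => hfresh g m₁ h1 h2 (by omega) h4 h5)
    have hE : E + ∑ k ∈ range l, F (a + k) ≤ K * ((j + 1 : ℕ) : ℝ) + β * ((a + l : ℕ) : ℝ) := by
      rcases hprev with h1 | ⟨g, h1, h2, h3, h4⟩
      · exact h1
      · exact absurd hrg (h3 _ h1 le_rfl)
    have hnew := hfresh (a + l) m' hag (by omega) (by omega) hrg
      (fun i h1 h2 => hno i h1 (by omega))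
    have hsum : ∑ k ∈ range (l + m'), F (a + k) =
        ∑ k ∈ range l, F (a + k) + ∑ k ∈ range m', F (a + l + k) := by
      rw [sum_range_add]
      simp only [add_assoc]
    have hdiff : (((a + (l + m') : ℕ) : ℝ) - ((a + l : ℕ) : ℝ)) = m' := by push_cast; ring
    by_cases hr : resc (a + (l + m'))
    · left
      have := hcomp (a + l) (a + (l + m')) (by omega) hrg hr hno
      rw [hdiff] at this
      rw [hsum]
      push_cast at *
      linarith
    · right
      refine ⟨a + l, by omega, hrg, fun k h1 h2 => ?_, ?_⟩
      · rcases h2.lt_or_eq with h2 | rfl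
        · exact hno k h1 h2
        · exact hr
      · rw [hdiff, hsum]
        linarith
  · push Not at hex
    have hnew := hnon m hm le_rfl hex
    rcases h with h | ⟨g, h1, h2, h3, h4⟩
    · left
      push_cast
      have : (0 : ℝ) ≤ β * m := by positivity
      nlinarith
    · have hno : ∀ i, g < i → i < a + m → ¬ resc i := fun i h5 h6 => by
        rcases le_or_gt i a with h7 | h7
        · exact h3 i h5 h7
        · exact hex i h7 h6
      have hga : (g : ℝ) ≤ a := by exact_mod_cast h1.le
      have hmono : R * (((a : ℝ) - g) / ((a : ℝ) - g + 1)) ≤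
          R * ((((a + m : ℕ) : ℝ) - g) / (((a + m : ℕ) : ℝ) - g + 1)) := by
        refine mul_le_mul_of_nonneg_left (div_add_one_mono (by linarith) ?_) hR
        push_cast
        have : (0 : ℝ) ≤ m := Nat.cast_nonneg _
        linarith
      by_cases hr : resc (a + m)
      · left
        have := hcomp g (a + m) (by omega) h2 hr hno
        push_cast at *
        linarith
      · right
        refine ⟨g, by omega, h2, fun k h5 h6 => ?_, ?_⟩
        · rcases h6.lt_or_eq with h6 | rfl
          · exact hno k h5 h6
          · exact hr
        · push_cast at *
          linarith

theorem ConsecPartition.cons {a b : ℕ} {q : ℕ × ℕ} {S : List (ℕ × ℕ)}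
    (h : ConsecPartition a b (q :: S)) :
    q.1 = a ∧ q.1 ≤ q.2 ∧ (S = [] ∧ q.2 = b ∨ ConsecPartition (q.2 + 1) b S) := by
  obtain ⟨-, h1, h2, h3, h4⟩ := h
  refine ⟨by simpa using h1, h3 q (by simp), ?_⟩
  cases S with
  | nil => left; simpa using h2
  | cons q' S =>
    right
    have h4 := List.isChain_cons_cons.1 h4
    exact ⟨by simp, by simpa using h4.1, by simpa using h2,
      fun p hp => h3 p (List.mem_cons_of_mem _ hp), h4.2⟩

theorem ConsecPartition.le {a b : ℕ} {S : List (ℕ × ℕ)} (h : ConsecPartition a b S) :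
    a ≤ b := by
  induction S generalizing a with
  | nil => exact absurd rfl h.1
  | cons q S ih =>
    obtain ⟨h1, h2, ⟨-, h3⟩ | h3⟩ := h.cons
    · omega
    · have := ih h3
      omega

theorem ConsecPartition.sum_eq {b : ℕ} {S : List (ℕ × ℕ)} (f : ℕ → ℝ) {a : ℕ}
    (h : ConsecPartition a b S) :
    ∑ k ∈ Icc a b, f k = (S.map fun q => ∑ k ∈ Icc q.1 q.2, f k).sum := by
  induction S generalizing a with
  | nil => exact absurd rfl h.1
  | cons q S ih =>
    obtain ⟨rfl, h2, ⟨rfl, rfl⟩ | h3⟩ := h.cons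
    · simp
    · rw [List.map_cons, List.sum_cons, ← ih h3]
      have hle := h3.le
      have hu : Icc q.1 b = Icc q.1 q.2 ∪ Icc (q.2 + 1) b := by
        ext k
        simp only [mem_union, mem_Icc]
        omega
      rw [hu, sum_union]
      rw [disjoint_left]
      intro k hk hk'
      simp only [mem_Icc] at hk hk'
      omega

theorem sum_Icc_pred_eq (F : ℕ → ℝ) (a m : ℕ) :
    ∑ k ∈ Icc (a + 1) (a + m), F (k - 1) = ∑ k ∈ range m, F (a + k) := by
  rw [← Finset.Ico_add_one_right_eq_Icc, sum_Ico_eq_sum_range]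
  have : a + m + 1 - (a + 1) = m := by omega
  rw [this]
  refine sum_congr rfl fun k _ => ?_
  congr 1
  omega

/-- Propagation of the accounting invariant over a whole partition. -/
theorem RedundancyInv.partition {resc : ℕ → Prop} {K β R : ℝ} (hβ : 0 ≤ β) (hR : 0 ≤ R)
    (hcomp : ∀ g k : ℕ, g < k → resc g → resc k → (∀ i, g < i → i < k → ¬ resc i) →
      R * (((k : ℝ) - g) / ((k : ℝ) - g + 1)) ≤ β * ((k : ℝ) - g))
    (F : ℕ × ℕ → ℕ → ℝ) {b : ℕ} {S : List (ℕ × ℕ)} {a j : ℕ} {E : ℝ}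
    (hS : ConsecPartition (a + 1) b S)
    (hnon : ∀ q ∈ S, ∀ u m, 1 ≤ m → q.1 ≤ u + 1 → u + m ≤ q.2 →
      (∀ i, u < i → i < u + m → ¬ resc i) → ∑ k ∈ range m, F q (u + k) ≤ K)
    (hfresh : ∀ q ∈ S, ∀ g m, 1 ≤ m → q.1 ≤ g + 1 → g + m ≤ q.2 → resc g →
      (∀ i, g < i → i < g + m → ¬ resc i) →
      ∑ k ∈ range m, F q (g + k) ≤ R * ((m : ℝ) / (m + 1)))
    (h : RedundancyInv resc K β R j a E) :
    RedundancyInv resc K β R (j + S.length) b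
      (E + (S.map fun q => ∑ k ∈ Icc q.1 q.2, F q (k - 1)).sum) := by
  induction S generalizing a j E with
  | nil => exact absurd rfl hS.1
  | cons q S ih =>
    obtain ⟨h1, h2, h3⟩ := hS.cons
    obtain ⟨m, hm⟩ : ∃ m, q.2 = a + m := ⟨q.2 - a, by omega⟩
    have hseg := RedundancyInv.segment hβ hR hcomp (F q) h m (by omega)
      (fun m' g1 g2 g3 => hnon q (by simp) a m' g1 (by omega) (by omega) g3)
      (fun g m' g1 g2 g3 g4 g5 => hfresh q (by simp) g m' g2 (by omega) (by omega) g4 g5)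
    rw [← sum_Icc_pred_eq, ← hm, ← h1] at hseg
    rcases h3 with ⟨rfl, rfl⟩ | h3
    · simpa using hseg
    · have := ih h3 (fun q hq => hnon q (List.mem_cons_of_mem _ hq))
        (fun q hq => hfresh q (List.mem_cons_of_mem _ hq)) hseg
      rw [List.map_cons, List.sum_cons, List.length_cons]
      convert this using 1 <;> ring

theorem sum_max_one_floor_le {N : ℕ} {cf : ℝ} (hc0 : 0 ≤ cf) (hc1 : cf ≤ 1) (s : Fin N → ℕ)
    (hs : ∀ x, 1 ≤ s x) :
    ((∑ i, max 1 ⌊cf * (s i : ℝ)⌋₊ : ℕ) : ℝ) ≤ N + cf * (((∑ i, s i : ℕ) : ℝ) - N) := by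
  have h : ∀ i, ((max 1 ⌊cf * (s i : ℝ)⌋₊ : ℕ) : ℝ) ≤ 1 + cf * ((s i : ℝ) - 1) := by
    intro i
    have hi : (1 : ℝ) ≤ s i := by exact_mod_cast hs i
    rw [Nat.cast_max, Nat.cast_one]
    refine max_le (by nlinarith) ((Nat.floor_le (by positivity)).trans (by linarith))
  push_cast
  calc ∑ i, max (1 : ℝ) (⌊cf * (s i : ℝ)⌋₊ : ℝ) ≤ ∑ i, (1 + cf * ((s i : ℝ) - 1)) :=
        sum_le_sum fun i _ => by simpa using h i
    _ = _ := by simp [sum_add_distrib, ← mul_sum, sum_sub_distrib]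

section Dynamics

variable {N d T : ℕ} {cf : ℝ} {s0 : Fin N → ℕ} {xs : ℕ → Fin N}

theorem RFDcounts_pos (hs0 : ∀ x, 1 ≤ s0 x) (k : ℕ) (x : Fin N) :
    1 ≤ RFDcounts cf d T s0 xs k x := by
  induction k generalizing x with
  | zero => exact hs0 x
  | succ k ih =>
    simp only [RFDcounts, RFDupdate]
    have := ih x
    split_ifs <;> simp <;> omega

theorem RFDcounts_succ_of_not_rescale {k : ℕ} (h : ¬ RFDrescaleAt cf d T s0 xs (k + 1))
    (x : Fin N) :
    RFDcounts cf d T s0 xs (k + 1) x =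
      RFDcounts cf d T s0 xs k x + if xs k = x then d else 0 := by
  have h' : ¬ T < (∑ i, RFDcounts cf d T s0 xs k i) + d := fun h1 =>
    h ⟨by omega, by simpa [RFDtotal] using h1⟩
  simp only [RFDcounts, RFDupdate, if_neg h']
  by_cases hx : x = xs k
  · simp [hx]
  · simp [hx, Ne.symm hx]

theorem RFDcounts_succ_of_rescale {k : ℕ} (h : RFDrescaleAt cf d T s0 xs (k + 1))
    (x : Fin N) :
    RFDcounts cf d T s0 xs (k + 1) x =
      max 1 ⌊cf * (RFDcounts cf d T s0 xs k x : ℝ)⌋₊ + if x = xs k then d else 0 := by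
  have h' : T < (∑ i, RFDcounts cf d T s0 xs k i) + d := by simpa [RFDtotal] using h.2
  simp only [RFDcounts, RFDupdate, if_pos h']
  split_ifs <;> simp

theorem RFDtotal_succ_of_not_rescale {k : ℕ} (h : ¬ RFDrescaleAt cf d T s0 xs (k + 1)) :
    RFDtotal cf d T s0 xs (k + 1) = RFDtotal cf d T s0 xs k + d := by
  simp [RFDtotal, RFDcounts_succ_of_not_rescale h, sum_add_distrib]

theorem RFDtotal_succ_of_rescale_le (hc0 : 0 ≤ cf) (hc1 : cf ≤ 1) (hs0 : ∀ x, 1 ≤ s0 x)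
    {k : ℕ} (h : RFDrescaleAt cf d T s0 xs (k + 1)) :
    (RFDtotal cf d T s0 xs (k + 1) : ℝ) ≤
      N + cf * ((RFDtotal cf d T s0 xs k : ℝ) - N) + d := by
  have h1 : RFDtotal cf d T s0 xs (k + 1) =
      (∑ i, max 1 ⌊cf * (RFDcounts cf d T s0 xs k i : ℝ)⌋₊) + d := by
    simp [RFDtotal, RFDcounts_succ_of_rescale h, sum_add_distrib]
  rw [h1, Nat.cast_add]
  have := sum_max_one_floor_le hc0 hc1 (RFDcounts cf d T s0 xs k) (RFDcounts_pos hs0 k)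
  unfold RFDtotal
  linarith

theorem RFDtotal_le (hc0 : 0 ≤ cf) (hc1 : cf ≤ 1) (hT : (d : ℝ) ≤ (1 - cf) * ((T : ℝ) - N))
    (hs0 : ∀ x, 1 ≤ s0 x) (hsum : ∑ x, s0 x ≤ T) (k : ℕ) : RFDtotal cf d T s0 xs k ≤ T := by
  induction k with
  | zero => exact hsum
  | succ k ih =>
    by_cases h : RFDrescaleAt cf d T s0 xs (k + 1)
    · have h1 := RFDtotal_succ_of_rescale_le hc0 hc1 hs0 h
      have h2 : (RFDtotal cf d T s0 xs k : ℝ) ≤ T := by exact_mod_cast ih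
      have h3 : (RFDtotal cf d T s0 xs (k + 1) : ℝ) ≤ T := by nlinarith
      exact_mod_cast h3
    · rw [RFDtotal_succ_of_not_rescale h]
      by_contra h1
      exact h ⟨by omega, by simpa using h1⟩

theorem card_le_RFDtotal (hs0 : ∀ x, 1 ≤ s0 x) (k : ℕ) : N ≤ RFDtotal cf d T s0 xs k := by
  have := sum_le_sum (s := univ) fun x (_ : x ∈ univ) =>
    RFDcounts_pos (cf := cf) (d := d) (T := T) (xs := xs) hs0 k x
  simpa [RFDtotal] using this

theorem RFDtotal_after_rescale_le (hc0 : 0 ≤ cf) (hc1 : cf ≤ 1)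
    (hT : (d : ℝ) ≤ (1 - cf) * ((T : ℝ) - N)) (hs0 : ∀ x, 1 ≤ s0 x) (hsum : ∑ x, s0 x ≤ T)
    {g : ℕ} (h : RFDrescaleAt cf d T s0 xs g) :
    (RFDtotal cf d T s0 xs g : ℝ) ≤ N + cf * ((T : ℝ) - N) + d := by
  obtain ⟨k, rfl⟩ : ∃ k, g = k + 1 := ⟨g - 1, by have := h.1; omega⟩
  have h1 := RFDtotal_succ_of_rescale_le hc0 hc1 hs0 h
  have h2 : (RFDtotal cf d T s0 xs k : ℝ) ≤ T := by
    exact_mod_cast RFDtotal_le hc0 hc1 hT hs0 hsum k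
  nlinarith

theorem exists_lt_RFDcounts_of_rescale {g : ℕ} (h : RFDrescaleAt cf d T s0 xs g) :
    ∃ y, d + 1 ≤ RFDcounts cf d T s0 xs g y := by
  obtain ⟨k, rfl⟩ : ∃ k, g = k + 1 := ⟨g - 1, by have := h.1; omega⟩
  refine ⟨xs k, ?_⟩
  rw [RFDcounts_succ_of_rescale h, if_pos rfl]
  have := le_max_left 1 ⌊cf * (RFDcounts cf d T s0 xs k (xs k) : ℝ)⌋₊
  omega

theorem RFDcounts_add {u m : ℕ}
    (h : ∀ i, u < i → i < u + m → ¬ RFDrescaleAt cf d T s0 xs i) :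
    ∀ k < m, ∀ x, RFDcounts cf d T s0 xs (u + k) x =
      RFDcounts cf d T s0 xs u x + d * Nat.count (fun j => xs (u + j) = x) k := by
  intro k
  induction k with
  | zero => simp
  | succ k ih =>
    intro hk x
    rw [← add_assoc, RFDcounts_succ_of_not_rescale (h (u + k + 1) (by omega) (by omega)),
      ih (by omega), Nat.count_succ]
    split_ifs <;> ring

theorem RFDtotal_add {u m : ℕ}
    (h : ∀ i, u < i → i < u + m → ¬ RFDrescaleAt cf d T s0 xs i) (k : ℕ) (hk : k < m) :
    RFDtotal cf d T s0 xs (u + k) = RFDtotal cf d T s0 xs u + d * k := by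
  unfold RFDtotal
  simp_rw [RFDcounts_add h k hk]
  rw [sum_add_distrib, ← mul_sum, sum_count_eq]

/-- Redundancy of Algorithm RFD on `m` consecutive steps without an intermediate rescale. -/
theorem RFD_redundancy_le (hN : 0 < N) (hd : 1 ≤ d) (hs0 : ∀ x, 1 ≤ s0 x) {u m : ℕ}
    (hm : 1 ≤ m)
    (h : ∀ i, u < i → i < u + m → ¬ RFDrescaleAt cf d T s0 xs i)
    (p : Fin N → ℝ) (hp : ∀ x, 0 ≤ p x) (hp1 : ∑ x, p x = 1)
    (hpos : ∀ k < m, 0 < p (xs (u + k)))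
    (v : ℝ) (hv : 0 ≤ v) (hw : (RFDtotal cf d T s0 xs u : ℝ) / d ≤ v + 1) :
    ∑ k ∈ range m, (Real.log (p (xs (u + k))) -
        Real.log (RFDprob cf d T s0 xs (u + k) (xs (u + k)))) ≤
      (#{x | RFDcounts cf d T s0 xs u x < d ∧ 0 < Nat.count (fun j => xs (u + j) = x) m} : ℝ) *
        (Real.log d + Real.log m) + (Real.log (v + 1) + v * Real.log m) := by
  have ht : 0 < RFDtotal cf d T s0 xs u := lt_of_lt_of_le hN (card_le_RFDtotal hs0 u)
  have h1 := sum_log_sub_sum_log_le (fun j => xs (u + j)) p hp hp1 m d hm hd hpos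
    (RFDcounts cf d T s0 xs u) (RFDcounts_pos hs0 u) _ ht (v + 1) hw
  have h2 := sum_log_add_div_le v hv m hm
  rw [sum_sub_distrib]
  have h3 : ∑ k ∈ range m, Real.log (RFDprob cf d T s0 xs (u + k) (xs (u + k))) =
      ∑ k ∈ range m, Real.log (((RFDcounts cf d T s0 xs u (xs (u + k)) : ℝ) +
        d * (Nat.count (fun j => xs (u + j) = xs (u + k)) k : ℕ)) /
        ((RFDtotal cf d T s0 xs u : ℝ) + d * k)) := by
    refine sum_congr rfl fun k hk => ?_
    rw [RFDprob, RFDcounts_add h k (mem_range.1 hk), RFDtotal_add h k (mem_range.1 hk)]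
    push_cast
    rfl
  rw [h3]
  linarith

end Dynamics

theorem card_mul_le_of_fresh {N d m : ℕ} (s : Fin N → ℕ) (y : Fin N) (hy : d ≤ s y)
    (z : ℕ → Fin N) :
    #{x | s x < d ∧ 0 < Nat.count (fun j => z j = x) m} * (m + 1) ≤ m * N := by
  set D := #{x | s x < d ∧ 0 < Nat.count (fun j => z j = x) m} with hD
  have h1 : D ≤ m := by
    calc D = ∑ x ∈ univ.filter (fun x => s x < d ∧ 0 < Nat.count (fun j => z j = x) m), 1 := by
          simp [hD]
      _ ≤ ∑ x ∈ univ.filter (fun x => s x < d ∧ 0 < Nat.count (fun j => z j = x) m),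
            Nat.count (fun j => z j = x) m :=
          sum_le_sum fun x hx => (mem_filter.1 hx).2.2
      _ ≤ ∑ x, Nat.count (fun j => z j = x) m :=
          sum_le_sum_of_subset (filter_subset _ _)
      _ = m := sum_count_eq z m
  have h2 : D + 1 ≤ N := by
    have : D < #(univ : Finset (Fin N)) := by
      refine card_lt_card ((filter_ssubset).2 ⟨y, mem_univ _, ?_⟩)
      omega
    simpa using this
  rcases le_or_gt (m + 1) N with h | h
  · exact Nat.mul_le_mul h1 h
  · nlinarith

theorem fresh_bound_le {N d m D : ℕ} {A L : ℝ} (hd : 1 ≤ d) (hm : 1 ≤ m) (hA : 0 ≤ A)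
    (hmL : (m : ℝ) ≤ L + 1) (hD : D * (m + 1) ≤ m * N) :
    (D : ℝ) * (Real.log d + Real.log m) + (Real.log (A + 1) + A * Real.log m) ≤
      ((N + A) * Real.log (L + 1) + (Real.log (A + 1) + (A + 1)) + N * Real.log d) *
        ((m : ℝ) / (m + 1)) := by
  have hd' : (1 : ℝ) ≤ d := by exact_mod_cast hd
  have hm' : (1 : ℝ) ≤ m := by exact_mod_cast hm
  have hD' : (D : ℝ) * (m + 1) ≤ m * N := by exact_mod_cast hD
  have l1 : Real.log m ≤ Real.log (L + 1) := Real.log_le_log (by linarith) hmL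
  have l2 : Real.log (A + 1) ≤ A := by
    have := Real.log_le_sub_one_of_pos (x := A + 1) (by linarith)
    linarith
  have l3 : Real.log m ≤ m - 1 := Real.log_le_sub_one_of_pos (by linarith)
  have l4 : 0 ≤ Real.log d := Real.log_nonneg hd'
  have l5 : 0 ≤ Real.log m := Real.log_nonneg hm'
  have l6 : 0 ≤ Real.log (A + 1) := Real.log_nonneg (by linarith)
  rw [mul_div_assoc', le_div_iff₀ (by linarith)]
  have e1 := mul_le_mul_of_nonneg_right hD' (add_nonneg l4 l5)
  have e2 : (m : ℝ) * N * Real.log m ≤ m * N * Real.log (L + 1) := by gcongr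
  have e3 : (m : ℝ) * A * Real.log m ≤ m * A * Real.log (L + 1) := by gcongr
  have e4 : A * Real.log m ≤ A * (m - 1) := by gcongr
  nlinarith

theorem nonfresh_bound_le {N d m D : ℕ} {A L B v : ℝ} (hd : 1 ≤ d) (hm : 1 ≤ m) (hA : 0 ≤ A)
    (hB : 1 ≤ B) (hmL : (m : ℝ) ≤ L + 1) (hD : D ≤ N) (hv : 0 ≤ v)
    (hvB : v ≤ B + A) :
    (D : ℝ) * (Real.log d + Real.log m) + (Real.log (v + 1) + v * Real.log m) ≤
      B * (1 + Real.log (L + 1)) + Real.log B +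
      ((N + A) * Real.log (L + 1) + (Real.log (A + 1) + (A + 1)) + N * Real.log d) := by
  have hd' : (1 : ℝ) ≤ d := by exact_mod_cast hd
  have hm' : (1 : ℝ) ≤ m := by exact_mod_cast hm
  have hD' : (D : ℝ) ≤ N := by exact_mod_cast hD
  have l1 : Real.log m ≤ Real.log (L + 1) := Real.log_le_log (by linarith) hmL
  have l2 : Real.log (v + 1) ≤ v := by
    have := Real.log_le_sub_one_of_pos (x := v + 1) (by linarith)
    linarith
  have l4 : 0 ≤ Real.log d := Real.log_nonneg hd'
  have l5 : 0 ≤ Real.log m := Real.log_nonneg hm'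
  have l6 : 0 ≤ Real.log (A + 1) := Real.log_nonneg (by linarith)
  have l7 : 0 ≤ Real.log B := Real.log_nonneg hB
  have e1 : (D : ℝ) * (Real.log d + Real.log m) ≤ N * (Real.log d + Real.log (L + 1)) := by
    gcongr
  have e2 : v * Real.log m ≤ (B + A) * Real.log (L + 1) := by gcongr
  nlinarith

/-- Theorem 2: with `A = N/d + c·L`, `L = (T-N)/d` and `r` as above,
let `0 < ε < 1` and let `PWS = (S, (p_I))` be a piecewise stationary model with
`p_I(x) ≤ 1 - ε` for every `I ∈ S` and every `x`. For any realization of Algorithm RFD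
with `c = γ/L` for an integer `γ ≥ 0`, setting `δ = r(L+1)/(ε·(L-γ)·log₂ e)`:
`ℓ(x^n; RFD) - (1+δ)·ℓ(x^n; PWS)
  ≤ |S|·[(L-γ)·log₂(e·(L+1)) + log₂(L-γ) + r(L+1)] + r(L+1)`.
If `PWS` assigns probability `0` somewhere, its code length is `+∞` and the claim is
trivial (first disjunct). -/
theorem stmt15 (N d T : ℕ) (cf : ℝ) (hN : 1 < N)
    (s0 : Fin N → ℕ) (xs : ℕ → Fin N)
    (hd : 1 ≤ d) (hc0 : 0 ≤ cf) (hc1 : cf < 1)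
    (hT : (d : ℝ) ≤ (1 - cf) * ((T : ℝ) - N))
    (hs0 : ∀ x, 1 ≤ s0 x) (hsum : ∑ x, s0 x ≤ T)
    (n : ℕ) (hn : 1 ≤ n)
    (L : ℝ) (hL : L = ((T : ℝ) - N) / d)
    (A : ℝ) (hA : A = (N : ℝ) / d + cf * L)
    (γ : ℕ) (hγ : cf = (γ : ℝ) / L)
    (ε : ℝ) (hε0 : 0 < ε) (hε1 : ε < 1)
    (S : List (ℕ × ℕ)) (hS : ConsecPartition 1 n S)
    (pI : ℕ × ℕ → Fin N → ℝ)
    (hpI : ∀ q ∈ S, (∀ x, 0 ≤ pI q x) ∧ ∑ x, pI q x = 1)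
    (hmax : ∀ q ∈ S, ∀ x, pI q x ≤ 1 - ε)
    (δ : ℝ) (hδ : δ = rBound N d A (L + 1) / (ε * (L - γ) * Real.logb 2 (Real.exp 1))) :
    (∃ q ∈ S, ∃ k ∈ Finset.Icc q.1 q.2, pI q (xs (k - 1)) = 0) ∨
      RFDcodeLen cf d T s0 xs 1 n - (1 + δ) * pwsCodeLen S pI xs ≤
        (S.length : ℝ) * ((L - (γ : ℝ)) * Real.logb 2 (Real.exp 1 * (L + 1))
            + Real.logb 2 (L - (γ : ℝ)) + rBound N d A (L + 1))
        + rBound N d A (L + 1) := by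
  by_cases hzero : ∃ q ∈ S, ∃ k ∈ Finset.Icc q.1 q.2, pI q (xs (k - 1)) = 0
  · exact Or.inl hzero
  right
  push Not at hzero
  have hd' : (1 : ℝ) ≤ d := by exact_mod_cast hd
  have hd0 : (0 : ℝ) < d := by linarith
  have hTN : (0 : ℝ) < (T : ℝ) - N :=
    pos_of_mul_pos_right (hd0.trans_le hT) (by linarith)
  have hL0 : 0 < L := hL ▸ div_pos hTN hd0
  have hLd : L * d = (T : ℝ) - N := by rw [hL]; field_simp
  have hcL : cf * L = γ := by rw [hγ]; field_simp
  have hcT : cf * ((T : ℝ) - N) = γ * d := by rw [← hLd, ← mul_assoc, hcL]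
  have hB : 1 ≤ L - γ := by
    have : d * 1 ≤ d * (L - γ) := by linarith
    exact le_of_mul_le_mul_left this hd0
  have hNd : (N : ℝ) / d * d = N := by field_simp
  have hA0 : 0 ≤ A := by
    rw [hA, hcL]
    positivity
  have hlog2 : 0 < Real.log 2 := Real.log_pos one_lt_two
  set Rn : ℝ := (N + A) * Real.log (L + 1) + (Real.log (A + 1) + (A + 1)) + N * Real.log d
    with hRn
  have hr : rBound N d A (L + 1) = Rn / Real.log 2 := by
    rw [rBound, hRn, Real.logb, Real.logb, Real.logb,
      Real.log_mul (by linarith) (Real.exp_pos _).ne', Real.log_exp]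
    ring
  have hR : 0 ≤ Rn := by
    have l1 : 0 ≤ Real.log (L + 1) := Real.log_nonneg (by linarith)
    have l2 : 0 ≤ Real.log (A + 1) := Real.log_nonneg (by linarith)
    have l3 : 0 ≤ Real.log d := Real.log_nonneg hd'
    positivity
  set K : ℝ := (L - γ) * (1 + Real.log (L + 1)) + Real.log (L - γ) + Rn with hK
  set β : ℝ := Rn / (L - γ) with hβ
  have hB0 : 0 < L - γ := by linarith
  have hβ0 : 0 ≤ β := by positivity
  have hposp : ∀ q ∈ S, ∀ k, q.1 ≤ k + 1 → k < q.2 → 0 < pI q (xs k) := by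
    intro q hq k h1 h2
    have := hzero q hq (k + 1) (mem_Icc.2 ⟨h1, by omega⟩)
    rw [Nat.add_sub_cancel] at this
    exact lt_of_le_of_ne ((hpI q hq).1 _) this.symm
  have htot : ∀ k, (RFDtotal cf d T s0 xs k : ℝ) ≤ T := fun k => by
    exact_mod_cast RFDtotal_le hc0 hc1.le hT hs0 hsum k
  have hlen : ∀ u m : ℕ, 1 ≤ m → (∀ i, u < i → i < u + m → ¬ RFDrescaleAt cf d T s0 xs i) →
      (m : ℝ) ≤ L + 1 := by
    intro u m hm h
    have h1 := htot (u + (m - 1))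
    rw [RFDtotal_add h (m - 1) (by omega)] at h1
    have h2 : (N : ℝ) ≤ RFDtotal cf d T s0 xs u := by exact_mod_cast card_le_RFDtotal hs0 u
    push_cast [Nat.cast_sub hm] at h1
    have h3 : d * (m : ℝ) ≤ d * (L + 1) := by linarith
    exact le_of_mul_le_mul_left h3 hd0
  have hafter : ∀ g, RFDrescaleAt cf d T s0 xs g →
      (RFDtotal cf d T s0 xs g : ℝ) ≤ N + γ * d + d := fun g hg => by
    rw [← hcT]
    exact RFDtotal_after_rescale_le hc0 hc1.le hT hs0 hsum hg
  have hinv := RedundancyInv.partition (resc := RFDrescaleAt cf d T s0 xs) (K := K) (β := β)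
    (R := Rn) (a := 0) (j := 0) (E := 0) hβ0 hR ?_
    (fun q k => Real.log (pI q (xs k)) - Real.log (RFDprob cf d T s0 xs k (xs k))) hS ?_ ?_
    (Or.inl (by simp))
  rotate_left
  · intro g k hgk hg hk hno
    have h1 := hk.2
    have h2 : k - 1 = g + (k - 1 - g) := by omega
    rw [h2, RFDtotal_add (m := k - g) (fun i h3 h4 => hno i h3 (by omega)) (k - 1 - g)
      (by omega)] at h1
    have h3 := hafter g hg
    have h4 : (T : ℝ) < RFDtotal cf d T s0 xs g + d * (k - 1 - g : ℕ) + d := by exact_mod_cast h1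
    have h5 : ((k - 1 - g : ℕ) : ℝ) = (k : ℝ) - g - 1 := by
      rw [Nat.cast_sub (by omega), Nat.cast_sub (by omega)]
      push_cast; ring
    rw [h5] at h4
    have h6 : d * (L - γ) < d * ((k : ℝ) - g + 1) := by linarith
    have h7 : L - γ ≤ (k : ℝ) - g + 1 := (lt_of_mul_lt_mul_left h6 hd0.le).le
    have h8 : (g : ℝ) ≤ k := by exact_mod_cast hgk.le
    have h9 : 0 ≤ (k : ℝ) - g := by linarith
    rw [hβ, div_mul_eq_mul_div, mul_div_assoc]
    gcongr
  · intro q hq u m hm h1 h2 hno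
    have hv : (RFDtotal cf d T s0 xs u : ℝ) / d ≤ (L - γ) + A := by
      rw [hA, hcL, div_le_iff₀ hd0]
      have e : (L - γ + ((N : ℝ) / d + γ)) * d = L * d + (N : ℝ) / d * d := by ring
      rw [e, hLd, hNd]
      linarith [htot u]
    refine (RFD_redundancy_le (by omega) hd hs0 hm hno (pI q) (hpI q hq).1 (hpI q hq).2
      (fun k hk => hposp q hq _ (by omega) (by omega))
      ((RFDtotal cf d T s0 xs u : ℝ) / d) (by positivity) (by linarith)).trans ?_
    exact nonfresh_bound_le hd hm hA0 hB (hlen u m hm hno)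
      ((card_filter_le _ _).trans (by simp)) (by positivity) hv
  · intro q hq g m hm h1 h2 hg hno
    have hv : (RFDtotal cf d T s0 xs g : ℝ) / d ≤ A + 1 := by
      rw [hA, hcL, div_le_iff₀ hd0]
      have e : ((N : ℝ) / d + γ + 1) * d = (N : ℝ) / d * d + γ * d + d := by ring
      rw [e, hNd]
      exact hafter g hg
    refine (RFD_redundancy_le (by omega) hd hs0 hm hno (pI q) (hpI q hq).1 (hpI q hq).2
      (fun k hk => hposp q hq _ (by omega) (by omega)) A hA0 hv).trans ?_
    obtain ⟨y, hy⟩ := exists_lt_RFDcounts_of_rescale hg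
    exact fresh_bound_le hd hm hA0 (hlen g m hm hno)
      (card_mul_le_of_fresh _ y (by omega) fun j => xs (g + j))
  have hE : (S.map fun q => ∑ k ∈ Icc q.1 q.2, (Real.log (pI q (xs (k - 1))) -
      Real.log (RFDprob cf d T s0 xs (k - 1) (xs (k - 1))))).sum ≤
      K * S.length + β * n + Rn := by
    rcases hinv with h | ⟨g, h1, -, -, h4⟩
    · simp only [zero_add] at h
      linarith
    · simp only [zero_add] at h4
      have hg : (g : ℝ) ≤ n := by exact_mod_cast h1.le
      have e1 : β * g ≤ β * n := by gcongr
      have e2 : Rn * (((n : ℝ) - g) / ((n : ℝ) - g + 1)) ≤ Rn * 1 := by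
        refine mul_le_mul_of_nonneg_left ?_ hR
        rw [div_le_one (by linarith)]
        linarith
      linarith
  set P : ℝ := (S.map fun q => ∑ k ∈ Icc q.1 q.2, -Real.log (pI q (xs (k - 1)))).sum with hP
  have hpws : pwsCodeLen S pI xs = P / Real.log 2 := by
    rw [pwsCodeLen, hP, div_eq_mul_inv, ← List.sum_map_mul_right]
    simp only [Real.logb, div_eq_mul_inv, sum_neg_distrib, sum_mul, neg_mul]
  have hrfd : RFDcodeLen cf d T s0 xs 1 n = (P + (S.map fun q => ∑ k ∈ Icc q.1 q.2,
      (Real.log (pI q (xs (k - 1))) -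
        Real.log (RFDprob cf d T s0 xs (k - 1) (xs (k - 1))))).sum) / Real.log 2 := by
    rw [RFDcodeLen, ← sum_neg_distrib, hS.sum_eq, hP, ← List.sum_map_add]
    simp only [Real.logb, sum_sub_distrib, sum_neg_distrib, ← sum_div]
    rw [div_eq_mul_inv, ← List.sum_map_mul_right]
    congr 1
    refine List.map_congr_left fun q _ => ?_
    ring
  have hPn : (n : ℝ) * ε ≤ P := by
    have hn' : (n : ℝ) * ε = (S.map fun q => ∑ k ∈ Icc q.1 q.2, ε).sum := by
      rw [← hS.sum_eq (fun _ => ε)]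
      simp
    rw [hn', hP]
    refine List.sum_le_sum fun q hq => sum_le_sum fun k hk => ?_
    have hk := mem_Icc.1 hk
    have hpos : 0 < pI q (xs (k - 1)) :=
      lt_of_le_of_ne ((hpI q hq).1 _) (hzero q hq k (mem_Icc.2 hk)).symm
    have := Real.log_le_sub_one_of_pos hpos
    have := hmax q hq (xs (k - 1))
    linarith
  have hδ' : δ = β / ε := by
    rw [hδ, hr, Real.logb, Real.log_exp, hβ]
    field_simp
  have hδP : β * n ≤ δ * P := by
    rw [hδ']
    have := mul_le_mul_of_nonneg_left hPn (by positivity : 0 ≤ β / ε)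
    refine le_trans (le_of_eq ?_) this
    field_simp
  rw [hrfd, hpws, hr, Real.logb, Real.logb, Real.log_mul (Real.exp_pos _).ne' (by linarith),
    Real.log_exp]
  set E := (S.map fun q => ∑ k ∈ Icc q.1 q.2, (Real.log (pI q (xs (k - 1))) -
      Real.log (RFDprob cf d T s0 xs (k - 1) (xs (k - 1))))).sum
  have lhs : (P + E) / Real.log 2 - (1 + δ) * (P / Real.log 2) =
      (E - δ * P) / Real.log 2 := by ring
  have rhs : (S.length : ℝ) * ((L - γ) * ((1 + Real.log (L + 1)) / Real.log 2) +
      Real.log (L - γ) / Real.log 2 + Rn / Real.log 2) + Rn / Real.log 2 =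
      (K * S.length + Rn) / Real.log 2 := by rw [hK]; ring
  rw [lhs, rhs]
  gcongr
  linarith
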